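/- arXiv:1612.03368 — 3 statements merged into one kernel-verified Lean document; each statement's English description precedes it below -/
import Mathlib

section
/- Let S² denote the unit sphere {x ∈ ℝ³ : ‖x‖ = 1} in Euclidean 3-space, regarded as a topological space with the subspace topology. If R₁, R₂, R₃ are closed connected subsets of S² such that R₁ ∪ R₂ ∪ R₃ = S² and each of the pairwise intersections R₁ ∩ R₂, R₂ ∩ R₃, R₁ ∩ R₃ is nonempty, then R₁ ∩ R₂ ∩ R₃ is nonempty. -/
/-!
Unicoherence is the heart of the matter: if `S²` is the union of two closed connected sets `P`
and `Q`, then `P ∩ Q` is connected. Applied to `P = R₁ ∪ R₂` and `Q = R₃`, it says that the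
connected set `P ∩ Q` is covered by the closed sets `R₁` and `R₂`, both of which meet it; hence
they meet inside it.

Unicoherence holds because nonvanishing continuous functions on `S²` have continuous logarithms.
Were `P ∩ Q` the union of disjoint nonempty closed sets `M` and `N`, take an Urysohn function `φ`
vanishing on `M` and equal to `1` on `N`. The function equal to `exp (2πiφ)` on `P` and to `1` on
`Q` is continuous, and a logarithm of it differs from `2πiφ` by a constant on `P` and is constant
on `Q`. So `φ` is constant on `P ∩ Q`, which is absurd.

The logarithms themselves are glued from the two stereographic charts of the sphere, whose
overlap is connected.
-/

open Complex Set

section ContinuousLogarithms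

variable {X Y : Type*} [TopologicalSpace X] [TopologicalSpace Y]

theorem exists_exp_eq_one_and_eqOn_add {s : Set X} {f g : X → ℂ} (hs : IsPreconnected s)
    (hf : ContinuousOn f s) (hg : ContinuousOn g s) (hfg : EqOn (exp ∘ f) (exp ∘ g) s) :
    ∃ c, exp c = 1 ∧ EqOn f (fun x ↦ g x + c) s := by
  rcases s.eq_empty_or_nonempty with rfl | ⟨a, ha⟩
  · exact ⟨0, exp_zero, eqOn_empty _ _⟩
  have hc : exp (f a - g a) = 1 := by
    rw [exp_sub, div_eq_one_iff_eq (exp_ne_zero _)]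
    exact hfg ha
  refine ⟨f a - g a, hc, isCoveringMap_exp.eqOn_of_comp_eqOn hs hf (hg.add continuousOn_const)
    (fun x hx ↦ Subtype.ext ?_) ha (by ring)⟩
  simpa only [Function.comp_apply, exp_add, hc, mul_one] using hfg hx

/-- Every function that is continuous and nowhere zero on `s` has a continuous logarithm on `s`.
For reasonable spaces this says that the first integral cohomology of `s` vanishes. -/
def HasContinuousLogOn (s : Set X) : Prop :=
  ∀ ⦃F : X → ℂ⦄, ContinuousOn F s → (∀ x ∈ s, F x ≠ 0) →
    ∃ L : X → ℂ, ContinuousOn L s ∧ EqOn (exp ∘ L) F s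

/-- A set is unicoherent if, whenever it is the union of two closed connected sets, these have
connected intersection; the empty set counts as connected. The two sets are closed in the ambient
space, so this is the usual notion for closed `s` only. -/
def IsUnicoherent (s : Set X) : Prop :=
  ∀ ⦃P Q : Set X⦄, IsClosed P → IsClosed Q → IsPreconnected P → IsPreconnected Q →
    P ∪ Q = s → IsPreconnected (P ∩ Q)

namespace HasContinuousLogOn

theorem univ_of_simplyConnectedSpace [SimplyConnectedSpace X] [LocallyPathConnectedSpace X] :
    HasContinuousLogOn (univ : Set X) := by
  intro F hF hF0
  have hX : IsSimplyConnected (univ : Set X) :=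
    (Homeomorph.Set.univ X).toHomotopyEquiv.simplyConnectedSpace
  exact exists_continuousOn_eqOn_exp_comp hX isOpen_univ hF (by simpa using hF0)

theorem of_retract {s : Set X} {t : Set Y} {r : X → Y} {i : Y → X} (ht : HasContinuousLogOn t)
    (hr : ContinuousOn r s) (hi : ContinuousOn i t) (hrst : MapsTo r s t) (hits : MapsTo i t s)
    (hir : LeftInvOn i r s) : HasContinuousLogOn s := by
  intro F hF hF0
  obtain ⟨L, hL, hLF⟩ := ht (hF.comp hi hits) fun y hy ↦ hF0 _ (hits hy)
  refine ⟨L ∘ r, hL.comp hr hrst, fun x hx ↦ ?_⟩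
  exact (hLF (hrst hx)).trans (congrArg F (hir hx))

theorem of_isOpen_cover {s U V : Set X} (hU : IsOpen U) (hV : IsOpen V) (hs : s ⊆ U ∪ V)
    (hsU : HasContinuousLogOn (s ∩ U)) (hsV : HasContinuousLogOn (s ∩ V))
    (hUV : IsPreconnected (s ∩ (U ∩ V))) : HasContinuousLogOn s := by
  classical
  intro F hF hF0
  obtain ⟨L, hL, hLF⟩ := hsU (hF.mono inter_subset_left) fun x hx ↦ hF0 x hx.1
  obtain ⟨M, hM, hMF⟩ := hsV (hF.mono inter_subset_left) fun x hx ↦ hF0 x hx.1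
  have hUV_left : s ∩ (U ∩ V) ⊆ s ∩ U := inter_subset_inter_right s inter_subset_left
  have hUV_right : s ∩ (U ∩ V) ⊆ s ∩ V := inter_subset_inter_right s inter_subset_right
  obtain ⟨c, hc, hLM⟩ := exists_exp_eq_one_and_eqOn_add hUV (hL.mono hUV_left)
    (hM.mono hUV_right) ((hLF.mono hUV_left).trans (hMF.mono hUV_right).symm)
  have eqOn_left : EqOn (U.piecewise L (fun x ↦ M x + c)) L (s ∩ U) :=
    (piecewise_eqOn _ _ _).mono inter_subset_right
  have eqOn_right : EqOn (U.piecewise L (fun x ↦ M x + c)) (fun x ↦ M x + c) (s ∩ V) := by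
    intro x hx
    by_cases hxU : x ∈ U
    · rw [piecewise_eq_of_mem _ _ _ hxU, hLM ⟨hx.1, hxU, hx.2⟩]
    · rw [piecewise_eq_of_notMem _ _ _ hxU]
  refine ⟨U.piecewise L (fun x ↦ M x + c), fun x hx ↦ ?_, fun x hx ↦ ?_⟩ <;>
    rcases hs hx with hxU | hxV
  · rw [← continuousWithinAt_inter (hU.mem_nhds hxU)]
    exact hL.congr eqOn_left x ⟨hx, hxU⟩
  · rw [← continuousWithinAt_inter (hV.mem_nhds hxV)]
    exact (hM.add continuousOn_const).congr eqOn_right x ⟨hx, hxV⟩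
  · rw [Function.comp_apply, eqOn_left ⟨hx, hxU⟩]
    exact hLF ⟨hx, hxU⟩
  · rw [Function.comp_apply, eqOn_right ⟨hx, hxV⟩, exp_add, hc, mul_one]
    exact hMF ⟨hx, hxV⟩

/-- The exactness at `H⁰(P ∩ Q)` of the Mayer–Vietoris sequence of the closed cover. -/
theorem exists_eqOn_add_of_isClosed {P Q : Set X} {f g : X → ℂ}
    (h : HasContinuousLogOn (P ∪ Q)) (hP : IsClosed P) (hQ : IsClosed Q)
    (hP' : IsPreconnected P) (hQ' : IsPreconnected Q) (hf : ContinuousOn f P)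
    (hg : ContinuousOn g Q) (hfg : EqOn (exp ∘ f) (exp ∘ g) (P ∩ Q)) :
    ∃ c, EqOn f (fun x ↦ g x + c) (P ∩ Q) := by
  classical
  set F : X → ℂ := P.piecewise (exp ∘ f) (exp ∘ g) with hF_def
  have eqOn_left : EqOn F (exp ∘ f) P := piecewise_eqOn _ _ _
  have eqOn_right : EqOn F (exp ∘ g) Q := by
    intro x hx
    by_cases hxP : x ∈ P
    · rw [eqOn_left hxP, hfg ⟨hxP, hx⟩]
    · rw [hF_def, piecewise_eq_of_notMem _ _ _ hxP]
  have hF : ContinuousOn F (P ∪ Q) :=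
    (hf.cexp.congr eqOn_left).union_of_isClosed (hg.cexp.congr eqOn_right) hP hQ
  have hF0 : ∀ x ∈ P ∪ Q, F x ≠ 0 := by
    rintro x (hx | hx)
    · exact eqOn_left hx ▸ exp_ne_zero _
    · exact eqOn_right hx ▸ exp_ne_zero _
  obtain ⟨L, hL, hLF⟩ := h hF hF0
  obtain ⟨a, -, ha⟩ := exists_exp_eq_one_and_eqOn_add hP' (hL.mono subset_union_left) hf
    ((hLF.mono subset_union_left).trans eqOn_left)
  obtain ⟨b, -, hb⟩ := exists_exp_eq_one_and_eqOn_add hQ' (hL.mono subset_union_right) hg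
    ((hLF.mono subset_union_right).trans eqOn_right)
  refine ⟨b - a, fun x hx ↦ ?_⟩
  linear_combination hb hx.2 - ha hx.1

theorem isUnicoherent [NormalSpace X] {s : Set X} (hs : HasContinuousLogOn s) :
    IsUnicoherent s := by
  rintro P Q hP hQ hP' hQ' rfl
  rw [isPreconnected_closed_iff]
  rintro t u ht hu hPQ ⟨x, hx, hxt⟩ ⟨y, hy, hyu⟩
  by_contra hdisj
  have hMN : Disjoint (P ∩ Q ∩ t) (P ∩ Q ∩ u) := by
    rw [disjoint_iff_inter_eq_empty, ← inter_inter_distrib_left]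
    exact not_nonempty_iff_eq_empty.mp hdisj
  obtain ⟨φ, hφ_zero, hφ_one, -⟩ := exists_continuous_zero_one_of_isClosed
    ((hP.inter hQ).inter ht) ((hP.inter hQ).inter hu) hMN
  have hexp : EqOn (exp ∘ fun z ↦ φ z * (2 * Real.pi * I)) (exp ∘ fun _ ↦ 0) (P ∩ Q) := by
    intro z hz
    rcases hPQ hz with hzt | hzu
    · simp [hφ_zero ⟨hz, hzt⟩]
    · simp [hφ_one ⟨hz, hzu⟩]
  obtain ⟨c, hc⟩ := hs.exists_eqOn_add_of_isClosed hP hQ hP' hQ' (by fun_prop)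
    continuousOn_const hexp
  have hc_zero : 0 = c := by simpa [hφ_zero ⟨hx, hxt⟩] using hc hx
  have hc_period : 2 * Real.pi * I = c := by simpa [hφ_one ⟨hy, hyu⟩] using hc hy
  exact two_pi_I_ne_zero (hc_period.trans hc_zero.symm)

end HasContinuousLogOn

theorem IsUnicoherent.inter_inter_nonempty {s A B C : Set X} (hs : IsUnicoherent s)
    (hA : IsClosed A) (hB : IsClosed B) (hC : IsClosed C) (hA' : IsPreconnected A)
    (hB' : IsPreconnected B) (hC' : IsPreconnected C) (hcover : A ∪ B ∪ C = s)
    (hAB : (A ∩ B).Nonempty) (hBC : (B ∩ C).Nonempty) (hAC : (A ∩ C).Nonempty) :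
    (A ∩ B ∩ C).Nonempty := by
  have hconn : IsPreconnected ((A ∪ B) ∩ C) :=
    hs (hA.union hB) hC (hA'.union' hAB hB') hC' hcover
  have hA_meets : ((A ∪ B) ∩ C ∩ A).Nonempty := hAC.mono fun _ hx ↦ ⟨⟨.inl hx.1, hx.2⟩, hx.1⟩
  have hB_meets : ((A ∪ B) ∩ C ∩ B).Nonempty := hBC.mono fun _ hx ↦ ⟨⟨.inr hx.1, hx.2⟩, hx.1⟩
  exact (isPreconnected_closed_iff.mp hconn A B hA hB inter_subset_left hA_meets hB_meets).mono
    fun _ hx ↦ ⟨hx.2, hx.1.2⟩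

end ContinuousLogarithms

section Sphere

variable {E : Type*} [NormedAddCommGroup E] [InnerProductSpace ℝ E] {v : E}

open Metric Submodule

theorem one_lt_rank_orthogonal_span_singleton (hE : 2 < Module.rank ℝ E) (v : E) :
    1 < Module.rank ℝ (ℝ ∙ v)ᗮ := by
  by_contra! hle
  refine hE.not_ge ?_
  calc Module.rank ℝ E = Module.rank ℝ ↥((ℝ ∙ v) ⊔ (ℝ ∙ v)ᗮ) := by
        rw [sup_orthogonal_of_hasOrthogonalProjection, rank_top]
    _ ≤ Module.rank ℝ (ℝ ∙ v) + Module.rank ℝ (ℝ ∙ v)ᗮ := rank_add_le_rank_add_rank _ _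
    _ ≤ 1 + 1 := add_le_add ((rank_span_le _).trans_eq (Cardinal.mk_singleton v)) hle
    _ = 2 := one_add_one_eq_two

theorem range_coe_stereoInvFun (hv : ‖v‖ = 1) :
    range (fun w ↦ (stereoInvFun hv w : E)) = sphere 0 1 ∩ {v}ᶜ := by
  have hrange : range (stereoInvFun hv) = {⟨v, by simpa using hv⟩}ᶜ := range_stereographic_symm hv
  change range (Subtype.val ∘ stereoInvFun hv) = _
  rw [range_comp, hrange]
  ext x
  simp [and_comm]

theorem stereoInvFun_zero (hv : ‖v‖ = 1) : (stereoInvFun hv 0 : E) = -v := by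
  simp [stereoInvFun_apply, smul_smul]

theorem hasContinuousLogOn_sphere_inter_compl_singleton (hv : ‖v‖ = 1) :
    HasContinuousLogOn (sphere (0 : E) 1 ∩ {v}ᶜ) := by
  have hcont : ContinuousOn (stereoToFun v) (sphere (0 : E) 1 ∩ {v}ᶜ) := by
    refine continuousOn_stereoToFun.mono fun x ⟨hx, hxv⟩ hinner ↦ hxv ?_
    exact ((inner_eq_one_iff_of_norm_eq_one hv (by simpa using hx)).mp hinner).symm
  rw [← range_coe_stereoInvFun hv] at hcont ⊢
  refine HasContinuousLogOn.univ_of_simplyConnectedSpace.of_retract hcont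
    (continuous_subtype_val.comp (continuous_stereoInvFun hv)).continuousOn (mapsTo_univ _ _)
    (fun w _ ↦ mem_range_self w) ?_
  rintro _ ⟨w, rfl⟩
  exact congrArg (fun w ↦ (stereoInvFun hv w : E)) (stereo_right_inv hv w)

theorem isPreconnected_sphere_inter_compl_pair (hE : 2 < Module.rank ℝ E) (hv : ‖v‖ = 1) :
    IsPreconnected (sphere (0 : E) 1 ∩ ({v}ᶜ ∩ {-v}ᶜ)) := by
  have hinj : Function.Injective fun w ↦ (stereoInvFun hv w : E) :=
    Function.LeftInverse.injective (g := stereoToFun v) (stereo_right_inv hv)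
  have himage : (fun w ↦ (stereoInvFun hv w : E)) '' {0}ᶜ = sphere 0 1 ∩ ({v}ᶜ ∩ {-v}ᶜ) := by
    rw [image_compl_eq_range_sdiff_image hinj, range_coe_stereoInvFun, image_singleton,
      stereoInvFun_zero, sdiff_eq, inter_assoc]
  rw [← himage]
  exact (isConnected_compl_singleton_of_one_lt_rank
    (one_lt_rank_orthogonal_span_singleton hE v) 0).isPreconnected.image _
    (continuous_subtype_val.comp (continuous_stereoInvFun hv)).continuousOn

theorem hasContinuousLogOn_sphere (hE : 2 < Module.rank ℝ E) :
    HasContinuousLogOn (sphere (0 : E) 1) := by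
  have : Nontrivial E := rank_pos_iff_nontrivial.mp (zero_lt_two.trans hE)
  obtain ⟨v, hv⟩ := exists_norm_eq E zero_le_one
  have hv_ne : v ≠ -v := fun h ↦
    ne_neg_of_mem_unit_sphere ℝ (⟨v, by simpa using hv⟩ : sphere (0 : E) 1) (Subtype.ext h)
  refine .of_isOpen_cover isOpen_compl_singleton isOpen_compl_singleton ?_
    (hasContinuousLogOn_sphere_inter_compl_singleton hv)
    (hasContinuousLogOn_sphere_inter_compl_singleton ((norm_neg v).trans hv))
    (isPreconnected_sphere_inter_compl_pair hE hv)
  rw [← compl_inter, singleton_inter_eq_empty.mpr (mt mem_singleton_iff.mp hv_ne), compl_empty]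
  exact subset_univ _

end Sphere

theorem stmt_5_general {E : Type*} [NormedAddCommGroup E] [InnerProductSpace ℝ E]
    (hE : 2 < Module.rank ℝ E) {R₁ R₂ R₃ : Set E}
    (hc₁ : IsClosed R₁) (hc₂ : IsClosed R₂) (hc₃ : IsClosed R₃)
    (hconn₁ : IsPreconnected R₁) (hconn₂ : IsPreconnected R₂) (hconn₃ : IsPreconnected R₃)
    (hcover : R₁ ∪ R₂ ∪ R₃ = Metric.sphere 0 1)
    (h₁₂ : (R₁ ∩ R₂).Nonempty) (h₂₃ : (R₂ ∩ R₃).Nonempty) (h₁₃ : (R₁ ∩ R₃).Nonempty) :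
    (R₁ ∩ R₂ ∩ R₃).Nonempty :=
  (hasContinuousLogOn_sphere hE).isUnicoherent.inter_inter_nonempty hc₁ hc₂ hc₃ hconn₁ hconn₂
    hconn₃ hcover h₁₂ h₂₃ h₁₃

/-- The paper's Lemma 6.2 in the setting of the 2-sphere `S² ⊆ ℝ³`:
three closed connected subsets of `S²` that cover `S²` and pairwise intersect
must have a common point. -/
theorem stmt_5 (R₁ R₂ R₃ : Set (EuclideanSpace ℝ (Fin 3)))
    (hs₁ : R₁ ⊆ Metric.sphere 0 1) (hs₂ : R₂ ⊆ Metric.sphere 0 1)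
    (hs₃ : R₃ ⊆ Metric.sphere 0 1)
    (hc₁ : IsClosed R₁) (hc₂ : IsClosed R₂) (hc₃ : IsClosed R₃)
    (hconn₁ : IsConnected R₁) (hconn₂ : IsConnected R₂) (hconn₃ : IsConnected R₃)
    (hcover : R₁ ∪ R₂ ∪ R₃ = Metric.sphere 0 1)
    (h₁₂ : (R₁ ∩ R₂).Nonempty) (h₂₃ : (R₂ ∩ R₃).Nonempty)
    (h₁₃ : (R₁ ∩ R₃).Nonempty) :
    (R₁ ∩ R₂ ∩ R₃).Nonempty :=
  stmt_5_general (by rw [← Module.finrank_eq_rank]; norm_num)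
    hc₁ hc₂ hc₃ hconn₁.2 hconn₂.2 hconn₃.2 hcover h₁₂ h₂₃ h₁₃
end

section
/- Let S² denote the unit sphere {x ∈ ℝ³ : ‖x‖ = 1} in Euclidean 3-space, with the distance induced from ℝ³, and for a point x and a nonempty set A ⊆ ℝ³ let infDist(x, A) denote the infimum of distances from x to points of A. Let D ⊆ S² be a nonempty compact set and let E ⊆ D be a nonempty compact connected set. Then the set R = {x ∈ S² : infDist(x, E) = infDist(x, D)} is closed in S² and connected. -/
/-!
Among points `q` of a sphere centred at the origin, the one nearest to `x` is the one maximizing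
`⟪q, x⟫`. So for `q ∈ D` the points of the sphere whose distance to `D` is attained at `q` are cut
out by a convex cone `K`. If `-q ∉ K`, then `K \ {0}` is star-shaped about `q`, and radial
projection shows that the cell of `q` is connected. If `-q ∈ K`, then `D = {q}` and the cell is the
whole sphere. For compact `E`, the region of `E` is the union of the cells of the `q ∈ E`, each of
which meets the connected set `E` at `q`. Passing to closures changes no distance.
-/

open Metric Set
open scoped RealInnerProductSpace

section Topology

variable {X : Type*} [TopologicalSpace X]

theorem isPreconnected_biUnion_of_forall_mem_self {E : Set X} {C : X → Set X}
    (hE : IsPreconnected E) (hC : ∀ q ∈ E, IsPreconnected (C q)) (hmem : ∀ q ∈ E, q ∈ C q) :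
    IsPreconnected (⋃ q ∈ E, C q) := by
  have hsub : E ⊆ ⋃ q ∈ E, C q := fun q hq => mem_biUnion hq (hmem q hq)
  rcases E.eq_empty_or_nonempty with rfl | ⟨e, he⟩
  · simpa using hE
  refine isPreconnected_of_forall e fun x hx => ?_
  obtain ⟨q, hq, hxq⟩ := mem_iUnion₂.1 hx
  exact ⟨E ∪ C q, union_subset hsub (subset_biUnion_of_mem hq), .inl he, .inr hxq,
    hE.union q hq (hmem q hq) (hC q hq)⟩

end Topology

section Metric

variable {X : Type*} [PseudoMetricSpace X] {D E S : Set X} {x : X}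

theorem infDist_eq_infDist_iff_exists_forall_dist_le (hED : E ⊆ D) (hE : IsCompact E)
    (hne : E.Nonempty) :
    infDist x E = infDist x D ↔ ∃ q ∈ E, ∀ d ∈ D, dist x q ≤ dist x d := by
  constructor
  · intro hx
    obtain ⟨q, hq, hxq⟩ := hE.exists_infDist_eq_dist hne x
    exact ⟨q, hq, fun d hd => hxq ▸ hx ▸ infDist_le_dist_of_mem hd⟩
  · rintro ⟨q, hq, hmin⟩
    refine le_antisymm ?_ (infDist_le_infDist_of_subset hED hne)
    exact (infDist_le_dist_of_mem hq).trans ((le_infDist (hne.mono hED)).2 fun d => hmin d)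

theorem isClosed_sep_infDist_eq_infDist (hS : IsClosed S) :
    IsClosed {x ∈ S | infDist x E = infDist x D} :=
  hS.inter (isClosed_eq (continuous_infDist_pt E) (continuous_infDist_pt D))

end Metric

section InnerProductSpace

variable {V : Type*} [NormedAddCommGroup V] [InnerProductSpace ℝ V] {D E : Set V} {q x : V} {r : ℝ}

section Cone

variable {K : PointedCone ℝ V}

theorem ne_zero_of_neg_notMem_pointedCone (hnq : -q ∉ K) : q ≠ 0 := by
  rintro rfl
  exact hnq (by simp)

theorem starConvex_pointedCone_diff_zero (hq : q ∈ K) (hnq : -q ∉ K) :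
    StarConvex ℝ q ((K : Set V) \ {0}) := by
  rintro x ⟨hxK, hx0⟩ a b ha hb hab
  refine ⟨K.convex hq hxK ha hb hab, fun hzero => ?_⟩
  rcases ha.eq_or_lt with rfl | ha
  · obtain rfl : b = 1 := by simpa using hab
    exact hx0 (by simpa using hzero)
  · have hneg : -q = (a⁻¹ * b) • x := by
      rw [mul_smul, ← neg_eq_of_add_eq_zero_right hzero, smul_neg, inv_smul_smul₀ ha.ne']
    exact hnq (hneg ▸ K.smul_mem (by positivity) hxK)

theorem image_radialProjection_pointedCone_diff_zero (hr : 0 < r) :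
    (fun y : V => (r / ‖y‖) • y) '' ((K : Set V) \ {0}) = sphere 0 r ∩ K := by
  ext x
  constructor
  · rintro ⟨y, ⟨hyK, hy0⟩, rfl⟩
    have hnorm : ‖y‖ ≠ 0 := norm_ne_zero_iff.2 hy0
    exact ⟨by simp [norm_smul, abs_of_pos hr, hnorm], K.smul_mem (by positivity) hyK⟩
  · rintro ⟨hx, hxK⟩
    have hnorm : ‖x‖ = r := mem_sphere_zero_iff_norm.1 hx
    exact ⟨x, ⟨hxK, ne_zero_of_mem_sphere hr.ne' ⟨x, hx⟩⟩, by simp [hnorm, hr.ne']⟩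

theorem isPreconnected_sphere_inter_pointedCone (hr : 0 < r) (hq : q ∈ K) (hnq : -q ∉ K) :
    IsPreconnected (sphere (0 : V) r ∩ K) := by
  have hconn : IsPreconnected ((K : Set V) \ {0}) :=
    ((starConvex_pointedCone_diff_zero hq hnq).isPathConnected
      ⟨hq, ne_zero_of_neg_notMem_pointedCone hnq⟩).isConnected.isPreconnected
  rw [← image_radialProjection_pointedCone_diff_zero hr]
  refine hconn.image _ (ContinuousOn.smul ?_ continuousOn_id)
  exact continuousOn_const.div continuousOn_id.norm fun y hy => norm_ne_zero_iff.2 hy.2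

end Cone

theorem dist_le_dist_iff_inner_sub_nonneg {a b : V} (hab : ‖a‖ = ‖b‖) :
    dist x a ≤ dist x b ↔ 0 ≤ ⟪a - b, x⟫ := by
  rw [dist_eq_norm, dist_eq_norm, ← sq_le_sq₀ (norm_nonneg _) (norm_nonneg _),
    norm_sub_sq_real, norm_sub_sq_real, hab, inner_sub_left, real_inner_comm a, real_inner_comm b]
  constructor <;> intro h <;> linarith

/-- The cone over the Voronoi cell of `q` among sites `D` lying on a sphere centred at the origin
and containing `q`. It is encoded as the dual cone of the differences `q - d`, so that convexity is
built in; see `mem_voronoiCone_iff_forall_dist_le` for the metric description. -/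
noncomputable def voronoiCone (D : Set V) (q : V) : PointedCone ℝ V :=
  PointedCone.dual (innerₗ V) ((q - ·) '' D)

theorem mem_voronoiCone : x ∈ voronoiCone D q ↔ ∀ d ∈ D, 0 ≤ ⟪q - d, x⟫ := by
  simp [voronoiCone]

theorem mem_voronoiCone_iff_forall_dist_le (hD : D ⊆ sphere 0 r) (hq : q ∈ D) :
    x ∈ voronoiCone D q ↔ ∀ d ∈ D, dist x q ≤ dist x d := by
  have hnorm : ∀ d ∈ D, ‖d‖ = r := fun d hd => mem_sphere_zero_iff_norm.1 (hD hd)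
  rw [mem_voronoiCone]
  exact forall₂_congr fun d hd =>
    (dist_le_dist_iff_inner_sub_nonneg ((hnorm q hq).trans (hnorm d hd).symm)).symm

theorem self_mem_voronoiCone (hD : D ⊆ sphere 0 r) (hq : q ∈ D) : q ∈ voronoiCone D q :=
  (mem_voronoiCone_iff_forall_dist_le hD hq).2 fun d _ => by simp

theorem eq_singleton_of_neg_mem_voronoiCone (hD : D ⊆ sphere 0 r) (hq : q ∈ D)
    (hneg : -q ∈ voronoiCone D q) : D = {q} := by
  refine eq_singleton_iff_unique_mem.2 ⟨hq, fun d hd => ?_⟩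
  have hnorm : ‖d‖ = ‖q‖ :=
    (mem_sphere_zero_iff_norm.1 (hD hd)).trans (mem_sphere_zero_iff_norm.1 (hD hq)).symm
  have hinner : ‖q‖ ^ 2 ≤ ⟪d, q⟫ := by
    simpa [inner_sub_left] using mem_voronoiCone.1 hneg d hd
  have hsq : ‖d - q‖ ^ 2 ≤ 0 := by
    rw [norm_sub_sq_real, hnorm]
    linarith
  simpa [sub_eq_zero] using hsq.antisymm (sq_nonneg _)

theorem isPreconnected_sphere_inter_voronoiCone (hV : 1 < Module.rank ℝ V)
    (hD : D ⊆ sphere 0 r) (hq : q ∈ D) :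
    IsPreconnected (sphere (0 : V) r ∩ voronoiCone D q) := by
  by_cases hneg : -q ∈ voronoiCone D q
  · obtain rfl := eq_singleton_of_neg_mem_voronoiCone hD hq hneg
    have htop : (voronoiCone {q} q : Set V) = univ := by
      ext x
      simp [mem_voronoiCone]
    simpa only [htop, inter_univ] using isPreconnected_sphere hV 0 r
  · have hnorm : ‖q‖ = r := mem_sphere_zero_iff_norm.1 (hD hq)
    have hr : 0 < r := hnorm ▸ norm_pos_iff.2 (ne_zero_of_neg_notMem_pointedCone hneg)
    exact isPreconnected_sphere_inter_pointedCone hr (self_mem_voronoiCone hD hq) hneg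

theorem sep_infDist_eq_infDist_eq_biUnion_voronoiCone (hD : D ⊆ sphere 0 r) (hED : E ⊆ D)
    (hE : IsCompact E) (hne : E.Nonempty) :
    {x ∈ sphere (0 : V) r | infDist x E = infDist x D} =
      ⋃ q ∈ E, sphere 0 r ∩ voronoiCone D q := by
  ext x
  have hcell : (∃ q ∈ E, ∀ d ∈ D, dist x q ≤ dist x d) ↔ ∃ q ∈ E, x ∈ voronoiCone D q :=
    exists_congr fun q => and_congr_right fun hq =>
      (mem_voronoiCone_iff_forall_dist_le hD (hED hq)).symm
  rw [mem_sep_iff, infDist_eq_infDist_iff_exists_forall_dist_le hED hE hne, hcell]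
  simp only [mem_iUnion, mem_inter_iff, SetLike.mem_coe, exists_prop]
  tauto

theorem isConnected_sep_infDist_eq_infDist_of_isCompact (hV : 1 < Module.rank ℝ V)
    (hD : D ⊆ sphere 0 r) (hED : E ⊆ D) (hE : IsCompact E) (hconn : IsConnected E) :
    IsConnected {x ∈ sphere (0 : V) r | infDist x E = infDist x D} := by
  rw [sep_infDist_eq_infDist_eq_biUnion_voronoiCone hD hED hE hconn.nonempty]
  have hself : ∀ q ∈ E, q ∈ sphere (0 : V) r ∩ voronoiCone D q := fun q hq =>
    ⟨hD (hED hq), self_mem_voronoiCone hD (hED hq)⟩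
  obtain ⟨e, he⟩ := hconn.nonempty
  exact ⟨⟨e, mem_biUnion he (hself e he)⟩,
    isPreconnected_biUnion_of_forall_mem_self hconn.isPreconnected
      (fun q hq => isPreconnected_sphere_inter_voronoiCone hV hD (hED hq)) hself⟩

theorem stmt_6_general (hV : 1 < Module.rank ℝ V) (hD : D ⊆ sphere 0 r) (hED : E ⊆ D)
    (hE : IsCompact (closure E)) (hconn : IsConnected E) :
    IsClosed {x ∈ sphere (0 : V) r | infDist x E = infDist x D} ∧
      IsConnected {x ∈ sphere (0 : V) r | infDist x E = infDist x D} := by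
  refine ⟨isClosed_sep_infDist_eq_infDist isClosed_sphere, ?_⟩
  simpa only [infDist_closure] using isConnected_sep_infDist_eq_infDist_of_isCompact hV
    (closure_minimal hD isClosed_sphere) (closure_mono hED) hE hconn.closure

end InnerProductSpace

/-- Key topological claim inside the proof of the paper's Lemma 6.1:
for a nonempty compact set `D ⊆ S²` and a nonempty compact connected subset
`E ⊆ D`, the region `R = {x ∈ S² : infDist x E = infDist x D}` is closed and
connected. -/
theorem stmt_6 (D E : Set (EuclideanSpace ℝ (Fin 3)))
    (hDsub : D ⊆ Metric.sphere 0 1) (hDne : D.Nonempty) (hDcpt : IsCompact D)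
    (hED : E ⊆ D) (hEne : E.Nonempty) (hEcpt : IsCompact E)
    (hEconn : IsConnected E) :
    IsClosed {x ∈ Metric.sphere (0 : EuclideanSpace ℝ (Fin 3)) 1 |
        Metric.infDist x E = Metric.infDist x D} ∧
      IsConnected {x ∈ Metric.sphere (0 : EuclideanSpace ℝ (Fin 3)) 1 |
        Metric.infDist x E = Metric.infDist x D} :=
  stmt_6_general (by simp [← Module.finrank_eq_rank]) hDsub hED hEcpt.closure hEconn
end

section
/- Let n ≥ 2 be a natural number, let k = ⌊2n/3⌋ and m = ⌈2n/3⌉, and define the cyclic distance on {0, 1, …, 2n−1} by d(a, b) = min(|a − b|, 2n − |a − b|). Then for all natural numbers a, b, c with a < k, k ≤ b < 2k, and 2k ≤ c < 2n, at least one of d(a, b), d(b, c), d(a, c) is greater than or equal to m. -/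
/-- The cyclic distance on `{0, 1, …, 2n−1}`:
`d(a, b) = min(|a − b|, 2n − |a − b|)`, where `|a − b|` is computed in `ℕ` as
`(a - b) + (b - a)` (truncated subtraction). -/
def cyclicDist (n a b : ℕ) : ℕ :=
  min ((a - b) + (b - a)) (2 * n - ((a - b) + (b - a)))

/-!
Three points cut the cycle into three arcs of total length `2n`, so one arc has length at least
`⌈2n/3⌉`. The distance between its endpoints is the length of that arc or of the complementary one,
whichever is smaller. With one point in each chain, the complement of every arc also has length at
least `⌈2n/3⌉`, so the endpoints of the longest arc are far apart.
-/

theorem le_cyclicDist_of_add_le {n m a b : ℕ} (hab : a + m ≤ b) (hba : b + m ≤ a + 2 * n) :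
    m ≤ cyclicDist n a b := by
  have arc_eq : (a - b) + (b - a) = b - a := by omega
  rw [cyclicDist, arc_eq]
  exact le_min (by omega) (by omega)

theorem add_le_or_add_le_or_add_le_add {L m : ℕ} (hm : 3 * m ≤ L + 2) (a b c : ℕ) :
    a + m ≤ b ∨ b + m ≤ c ∨ c + m ≤ a + L := by
  by_contra! ⟨hab, hbc, hca⟩
  omega

/- The last three hypotheses bound from below the complements of the arcs from `a` to `b`,
from `b` to `c`, and from `c` around to `a`. -/
theorem le_cyclicDist_or_of_complement_arcs {n m a b c : ℕ} (hm : 3 * m ≤ 2 * n + 2)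
    (hba : b + m ≤ a + 2 * n) (hcb : c + m ≤ b + 2 * n) (hac : a + m ≤ c) :
    m ≤ cyclicDist n a b ∨ m ≤ cyclicDist n b c ∨ m ≤ cyclicDist n a c := by
  rcases add_le_or_add_le_or_add_le_add hm a b c with hab | hbc | hca
  · exact .inl (le_cyclicDist_of_add_le hab hba)
  · exact .inr (.inl (le_cyclicDist_of_add_le hbc hcb))
  · exact .inr (.inr (le_cyclicDist_of_add_le hac hca))

/-- The combinatorial core of the paper's Lemma 6.1: split the cycle of length
`2n` into three chains `[0, k)`, `[k, 2k)`, `[2k, 2n)` with `k = ⌊2n/3⌋`; then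
any triple taken one from each chain contains a pair at cyclic distance at
least `m = ⌈2n/3⌉`. -/
theorem stmt_8 (n : ℕ) (hn : 2 ≤ n) (k m : ℕ)
    (hk : k = 2 * n / 3) (hm : m = (2 * n + 2) / 3)
    (a b c : ℕ) (ha : a < k) (hb₁ : k ≤ b) (hb₂ : b < 2 * k)
    (hc₁ : 2 * k ≤ c) (hc₂ : c < 2 * n) :
    m ≤ cyclicDist n a b ∨ m ≤ cyclicDist n b c ∨ m ≤ cyclicDist n a c := by
  have three_mul_m_le : 3 * m ≤ 2 * n + 2 := by omega
  have m_le_succ_k : m ≤ k + 1 := by omega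
  have two_mul_k_add_m_le : 2 * k + m ≤ 2 * n := by omega
  have hba : b + m ≤ a + 2 * n := by linarith
  have hcb : c + m ≤ b + 2 * n := by linarith
  have hac : a + m ≤ c := by linarith
  exact le_cyclicDist_or_of_complement_arcs three_mul_m_le hba hcb hac
end
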